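/- For every level t there exists a finite set {u₁, …, uₙ} of wellformed sublevels (possibly empty) such that for every valuation σ, ⟦t⟧σ = max(⟦u₁⟧σ, …, ⟦uₙ⟧σ), where the maximum over the empty set is 0. -/

import Mathlib

/-- The impredicative maximum on natural numbers. -/
def imaxN : ℕ → ℕ → ℕ
  | _, 0 => 0
  | i, (j+1) => max i (j+1)

/-- Levels: t ::= 0 | s(t) | x | max(t,t) | imax(t,t). -/
inductive Lvl where
  | zero : Lvl
  | succ : Lvl → Lvl
  | var : ℕ → Lvl
  | lmax : Lvl → Lvl → Lvl
  | limax : Lvl → Lvl → Lvl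

/-- Value of a level under a valuation. -/
def evalL (σ : ℕ → ℕ) : Lvl → ℕ
  | .zero => 0
  | .succ t => evalL σ t + 1
  | .var x => σ x
  | .lmax u v => max (evalL σ u) (evalL σ v)
  | .limax u v => imaxN (evalL σ u) (evalL σ v)

/-- Maximum of a list of naturals, 0 for the empty list. -/
def listMax (l : List ℕ) : ℕ := l.foldr max 0

/-- Sublevels A(E,x,S) and B(E,S). -/
inductive SubLvl where
  | A : Finset ℕ → ℕ → ℕ → SubLvl
  | B : Finset ℕ → ℕ → SubLvl
deriving DecidableEq

/-- Value of a sublevel under a valuation. -/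
def evalS (σ : ℕ → ℕ) : SubLvl → ℕ
  | .A E x S => if ∃ y ∈ E, σ y = 0 then 0 else σ x + S
  | .B E S => if ∃ y ∈ E, σ y = 0 then 0 else S

/-- Wellformed sublevels. -/
def Wf : SubLvl → Prop
  | .A E x _ => x ∈ E
  | .B _ S => 0 < S

/-- Semantic comparison of sublevels. -/
def leT (u v : SubLvl) : Prop := ∀ σ : ℕ → ℕ, evalS σ u ≤ evalS σ v

def domS : SubLvl → Finset ℕ
  | .A E _ _ => E
  | .B E _ => E

def incS : SubLvl → SubLvl
  | .A E x S => .A E x (S+1)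
  | .B E S => .B E (S+1)

def guardS (F : Finset ℕ) : SubLvl → SubLvl
  | .A E x S => .A (E ∪ F) x S
  | .B E S => .B (E ∪ F) S

theorem wf_incS {u : SubLvl} (h : Wf u) : Wf (incS u) := by
  cases u <;> simp_all [Wf, incS]

theorem wf_guardS {F : Finset ℕ} {u : SubLvl} (h : Wf u) : Wf (guardS F u) := by
  cases u <;> simp_all [Wf, guardS]

theorem evalS_eq_zero {u : SubLvl} (h : Wf u) (σ : ℕ → ℕ) :
    evalS σ u = 0 ↔ ∃ y ∈ domS u, σ y = 0 := by
  cases u with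
  | A E x S =>
    simp only [Wf] at h
    simp only [evalS, domS]
    split_ifs with h1
    · simp [h1]
    · have : σ x ≠ 0 := fun h2 => h1 ⟨x, h, h2⟩
      simp only [h1, iff_false]
      omega
  | B E S =>
    simp only [Wf] at h
    simp only [evalS, domS]
    split_ifs with h1
    · simp [h1]
    · simp only [h1, iff_false]
      omega

theorem evalS_incS {u : SubLvl} (h : Wf u) (σ : ℕ → ℕ) :
    evalS σ (incS u) = if evalS σ u = 0 then 0 else evalS σ u + 1 := by
  simp only [evalS_eq_zero h σ]
  cases u <;> simp only [evalS, incS, domS] <;> split_ifs <;> rfl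

theorem evalS_guardS (a b : SubLvl) (h : Wf b) (σ : ℕ → ℕ) :
    evalS σ (guardS (domS b) a) = if evalS σ b = 0 then 0 else evalS σ a := by
  simp only [evalS_eq_zero h σ]
  cases a <;> simp only [evalS, guardS, Finset.mem_union] <;> split_ifs <;> first | rfl | (exfalso; grind)

theorem level_as_max_of_wf_sublevels (t : Lvl) :
    ∃ U : Finset SubLvl, (∀ u ∈ U, Wf u) ∧
      ∀ σ : ℕ → ℕ, evalL σ t = U.sup (evalS σ) := by
  induction t with
  | zero => exact ⟨∅, by simp, fun σ => by simp [evalL]⟩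
  | var x =>
    refine ⟨{.A {x} x 0}, by simp [Wf], fun σ => ?_⟩
    simp only [evalL, Finset.sup_singleton, evalS]
    split_ifs with h
    · simpa using h
    · rfl
  | succ t ih =>
    obtain ⟨U, hU, hs⟩ := ih
    refine ⟨insert (.B ∅ 1) (U.image incS), ?_, fun σ => ?_⟩
    · intro u hu
      simp only [Finset.mem_insert, Finset.mem_image] at hu
      rcases hu with rfl | ⟨a, ha, rfl⟩
      · simp [Wf]
      · exact wf_incS (hU a ha)
    · simp only [evalL, hs σ]
      refine eq_of_forall_ge_iff fun c => ?_
      simp only [Finset.sup_insert, sup_le_iff, Finset.sup_le_iff, Finset.forall_mem_image]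
      have h1 : evalS σ (.B ∅ 1) = 1 := by simp [evalS]
      rw [h1]
      constructor
      · intro h
        refine ⟨by omega, fun a ha => ?_⟩
        have := Finset.le_sup (f := evalS σ) ha
        rw [evalS_incS (hU a ha)]
        split_ifs <;> omega
      · rintro ⟨h, h2⟩
        obtain ⟨d, rfl⟩ : ∃ d, c = d + 1 := ⟨c - 1, by omega⟩
        refine Nat.succ_le_succ (Finset.sup_le fun a ha => ?_)
        have := h2 ha
        rw [evalS_incS (hU a ha)] at this
        split_ifs at this <;> omega
  | lmax u v ihu ihv =>
    obtain ⟨U, hU, hu⟩ := ihu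
    obtain ⟨V, hV, hv⟩ := ihv
    refine ⟨U ∪ V, ?_, fun σ => ?_⟩
    · intro a ha
      rcases Finset.mem_union.1 ha with h | h
      exacts [hU a h, hV a h]
    · simp only [evalL, hu, hv, Finset.sup_union]
  | limax u v ihu ihv =>
    obtain ⟨U, hU, hu⟩ := ihu
    obtain ⟨V, hV, hv⟩ := ihv
    refine ⟨V ∪ (U ×ˢ V).image (fun p => guardS (domS p.2) p.1), ?_, fun σ => ?_⟩
    · intro a ha
      rcases Finset.mem_union.1 ha with h | h
      · exact hV a h
      · obtain ⟨p, hp, rfl⟩ := Finset.mem_image.1 h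
        exact wf_guardS (hU _ (Finset.mem_product.1 hp).1)
    · have hi : ∀ i j, imaxN i j = if j = 0 then 0 else max i j := by
        intro i j
        cases j <;> simp [imaxN]
      simp only [evalL, hu, hv, hi]
      refine eq_of_forall_ge_iff fun c => ?_
      simp only [Finset.sup_union, sup_le_iff, Finset.sup_le_iff, Finset.forall_mem_image]
      constructor
      · intro h
        constructor
        · intro b hb
          have := Finset.le_sup (f := evalS σ) hb
          split_ifs at h <;> omega
        · intro p hp
          obtain ⟨h1, h2⟩ := Finset.mem_product.1 hp
          rw [evalS_guardS _ _ (hV _ h2)]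
          have := Finset.le_sup (f := evalS σ) h1
          have := Finset.le_sup (f := evalS σ) h2
          split_ifs at h ⊢ <;> omega
      · rintro ⟨h1, h2⟩
        split_ifs with h0
        · omega
        · obtain ⟨b, hb, hb0⟩ : ∃ b ∈ V, evalS σ b ≠ 0 := by
            by_contra! hc
            exact h0 (Nat.le_zero.1 (Finset.sup_le fun b hb => (hc b hb).le))
          refine max_le (Finset.sup_le fun a ha => ?_) (Finset.sup_le h1)
          have := h2 (Finset.mk_mem_product ha hb)
          rwa [evalS_guardS _ _ (hV _ hb), if_neg hb0] at this
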